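/- Let R be a commutative ring with unity. The class of locally injective R-modules is λ-categorical in all cardinals λ > card(R) + ℵ₀ if and only if R is a local artinian ring. -/

import Mathlib

/-! Statement 8: for a commutative ring `R`, the class of locally injective `R`-modules is
categorical in all cardinals `> card R + ℵ₀` iff `R` is a local artinian ring. -/

universe u

open Cardinal

/-- A class `K` of left `R`-modules is `c`-categorical if it contains a module of
cardinality `c` and any two modules in `K` of cardinality `c` are isomorphic. -/
def Categorical (R : Type u) [Ring R] (K : ModuleCat.{u} R → Prop) (c : Cardinal.{u}) : Prop :=
  (∃ M : ModuleCat.{u} R, K M ∧ #M = c) ∧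
    ∀ M N : ModuleCat.{u} R, K M → K N → #M = c → #N = c → Nonempty (M ≃ₗ[R] N)

/-- A module `M` is locally injective if every finite subset of `M` is contained in an
injective submodule of `M`. -/
def LocallyInjective (R : Type u) [Ring R] (M : Type u) [AddCommGroup M]
    [Module R M] : Prop :=
  ∀ s : Finset M, ∃ N : Submodule R M, (s : Set M) ⊆ (N : Set M) ∧ Module.Injective R N

/-!
Suppose locally injective modules are categorical in all large cardinals. If `L` is locally
injective and `Q` is a large enough injective module, then `Q` and `L × Q` are locally injective
of the same cardinality, so `Q ≃ L × Q`. Two things follow. First, `L` is a direct summand of an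
injective module, so every locally injective module is injective; in particular `E^(ℕ)` is
injective for every injective `E`, which by Bass forces `R` to be Noetherian. Second, every
nonunit `s` is nilpotent: otherwise an injective module over the flat nonzero `R`-algebra
`R[1/s]` gives arbitrarily large injective `Q` on which `s` acts injectively, while `s` does not
act injectively on an injective `L` containing `R ⧸ (s)`. A Noetherian ring whose nonunits are
all nilpotent is local artinian.

Conversely, let `R` be local artinian with maximal ideal `m`, which is nilpotent and finitely
generated. Locally injective modules are injective because `R` is Noetherian. The submodule
`M[m]` of elements of `M` killed by `m` is essential in `M`, so an injective `M` is determined by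
the `R ⧸ m`-vector space `M[m]`; and `#M[m] = #M` for uncountable `M`, so above `#R + ℵ₀` the
dimension of `M[m]` is determined by `#M`. For existence, the restriction `End J → End J[m]` is
surjective with nil kernel when `J` is injective, so the projection of `J[m]` onto any subspace
`V` lifts to an idempotent of `End J`, whose range is an injective module `H` with `H[m] = V`.
-/

universe v

open Filter Submodule

section InjectiveModules

section Ring

variable {R : Type u} [Ring R]

theorem injective_of_leftInverse {M N : Type v} [AddCommGroup M] [Module R M] [AddCommGroup N]
    [Module R N] [Module.Injective R N] (i : M →ₗ[R] N) (p : N →ₗ[R] M)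
    (h : Function.LeftInverse p i) : Module.Injective R M where
  out _ _ _ _ _ _ f hf g := by
    obtain ⟨k, hk⟩ := Module.Injective.out f hf (i ∘ₗ g)
    exact ⟨p ∘ₗ k, fun x => by simp [hk, h (g x)]⟩

theorem injective_of_linearEquiv {M N : Type v} [AddCommGroup M] [Module R M] [AddCommGroup N]
    [Module R N] [Module.Injective R N] (e : M ≃ₗ[R] N) : Module.Injective R M :=
  injective_of_leftInverse e.toLinearMap e.symm.toLinearMap e.symm_apply_apply

instance injective_prod {M N : Type v} [AddCommGroup M] [Module R M] [AddCommGroup N]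
    [Module R N] [Module.Injective R M] [Module.Injective R N] : Module.Injective R (M × N) where
  out _ _ _ _ _ _ f hf g := by
    obtain ⟨k, hk⟩ := Module.Injective.out f hf (LinearMap.fst R M N ∘ₗ g)
    obtain ⟨l, hl⟩ := Module.Injective.out f hf (LinearMap.snd R M N ∘ₗ g)
    exact ⟨k.prod l, fun x => by ext <;> simp [hk, hl]⟩

theorem exists_injective_embedding (M : Type u) [AddCommGroup M] [Module R M] :
    ∃ (Q : Type u) (_ : AddCommGroup Q) (_ : Module R Q),
      Module.Injective R Q ∧ ∃ f : M →ₗ[R] Q, Function.Injective f := by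
  let Q := CategoryTheory.Injective.under (ModuleCat.of R M)
  exact ⟨Q, inferInstance, inferInstance,
    (Module.injective_iff_injective_object R Q).2 (inferInstanceAs (CategoryTheory.Injective Q)),
    (CategoryTheory.Injective.ι (ModuleCat.of R M)).hom,
    (ModuleCat.mono_iff_injective _).1 inferInstance⟩

variable (R) in
theorem exists_injective_le_mk [Nontrivial R] (c : Cardinal.{u}) :
    ∃ (Q : Type u) (_ : AddCommGroup Q) (_ : Module R Q), Module.Injective R Q ∧ c ≤ #Q := by
  obtain ⟨Q, _, _, hQ, f, hf⟩ := exists_injective_embedding (R := R) (c.out →₀ R)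
  refine ⟨Q, _, _, hQ, ?_⟩
  rw [← mk_out c]
  exact mk_le_of_injective (hf.comp (Finsupp.single_left_injective one_ne_zero))

end Ring

variable {R : Type u} [CommRing R]

variable (R) in
theorem injective_restrictScalars (A : Type u) [CommRing A] [Algebra R A] [Module.Flat R A]
    (Q : Type u) [AddCommGroup Q] [Module A Q] [Module R Q] [IsScalarTower R A Q]
    [Module.Injective A Q] : Module.Injective R Q where
  out _ _ _ _ _ _ f hf g := by
    obtain ⟨k, hk⟩ := Module.Injective.out (f.baseChange A)
      (Module.Flat.lTensor_preserves_injective_linearMap f hf) (g.liftBaseChange A)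
    refine ⟨(LinearMap.liftBaseChangeEquiv A).symm k, fun x => ?_⟩
    simpa using hk (1 ⊗ₜ x)

theorem exists_injective_le_mk_isSMulRegular {s : R} (hs : ¬IsNilpotent s) (c : Cardinal.{u}) :
    ∃ (Q : Type u) (_ : AddCommGroup Q) (_ : Module R Q),
      Module.Injective R Q ∧ c ≤ #Q ∧ IsSMulRegular Q s := by
  have : Nontrivial (Localization.Away s) := by
    rwa [← not_subsingleton_iff_nontrivial,
      IsLocalization.subsingleton_iff (M := Submonoid.powers s)]
  obtain ⟨Q, _, _, _, hQ⟩ := exists_injective_le_mk (Localization.Away s) c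
  let _ : Module R Q := Module.compHom Q (algebraMap R (Localization.Away s))
  have : IsScalarTower R (Localization.Away s) Q := .of_algebraMap_smul fun _ _ => rfl
  have hs' : IsUnit (algebraMap R (Localization.Away s) s) :=
    IsLocalization.Away.algebraMap_isUnit s
  exact ⟨Q, _, _, injective_restrictScalars R (Localization.Away s) Q, hQ, hs'.isSMulRegular Q⟩

theorem exists_injective_not_isSMulRegular {s : R} (hs : ¬IsUnit s) :
    ∃ (L : Type u) (_ : AddCommGroup L) (_ : Module R L),
      Module.Injective R L ∧ ¬IsSMulRegular L s := by
  obtain ⟨L, _, _, hL, f, hf⟩ := exists_injective_embedding (R := R) (R ⧸ Ideal.span {s})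
  refine ⟨L, _, _, hL, fun hreg => hs ?_⟩
  have hs1 : s • f 1 = s • 0 := by
    rw [← map_smul, Algebra.smul_def, mul_one, Ideal.Quotient.algebraMap_eq,
      Ideal.Quotient.eq_zero_iff_mem.2 (Ideal.mem_span_singleton_self s), map_zero, smul_zero]
  have h1 : (1 : R ⧸ Ideal.span {s}) = 0 := (map_eq_zero_iff f hf).1 (hreg hs1)
  rwa [← map_one (Ideal.Quotient.mk _), Ideal.Quotient.eq_zero_iff_mem,
    Ideal.mem_span_singleton, ← isUnit_iff_dvd_one] at h1

end InjectiveModules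

namespace LocallyInjective

variable {R : Type u} [Ring R] {M N : Type u} [AddCommGroup M] [Module R M]
  [AddCommGroup N] [Module R N]

theorem of_injective [Module.Injective R M] : LocallyInjective R M := fun _ =>
  ⟨⊤, Set.subset_univ _, injective_of_linearEquiv Submodule.topEquiv⟩

theorem prod (hM : LocallyInjective R M) (hN : LocallyInjective R N) :
    LocallyInjective R (M × N) := by
  classical
  intro s
  obtain ⟨M', hsM, _⟩ := hM (s.image Prod.fst)
  obtain ⟨N', hsN, _⟩ := hN (s.image Prod.snd)
  refine ⟨M'.prod N', fun x hx => ⟨hsM (Finset.mem_coe.2 (Finset.mem_image_of_mem _ hx)),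
    hsN (Finset.mem_coe.2 (Finset.mem_image_of_mem _ hx))⟩, ?_⟩
  exact injective_of_leftInverse
    (((LinearMap.fst R M N).restrict (p := M'.prod N') (q := M') fun _ hx => hx.1).prod
      ((LinearMap.snd R M N).restrict (p := M'.prod N') (q := N') fun _ hx => hx.2))
    ((M'.subtype.prodMap N'.subtype).codRestrict (M'.prod N') fun x => ⟨x.1.2, x.2.2⟩)
    fun _ => rfl

theorem finsupp {ι : Type} [Module.Injective R M] : LocallyInjective R (ι →₀ M) := by
  classical
  intro s
  let S : Finset ι := s.biUnion Finsupp.support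
  refine ⟨Finsupp.supported M R (S : Set ι), fun f hf => ?_, ?_⟩
  · exact_mod_cast Finset.subset_biUnion_of_mem Finsupp.support hf
  · exact injective_of_linearEquiv ((Finsupp.supportedEquivFinsupp (S : Set ι)).trans
      (Finsupp.linearEquivFunOnFinite R M (S : Set ι)))

theorem injective [IsNoetherianRing R] (hM : LocallyInjective R M) : Module.Injective R M := by
  refine Module.Baer.injective fun I g => ?_
  obtain ⟨s, hs⟩ := Module.Finite.fg_top.map g
  obtain ⟨N, hsN, hN⟩ := hM s
  have hgN : LinearMap.range g ≤ N := by
    rw [LinearMap.range_eq_map, ← hs]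
    exact span_le.2 hsN
  obtain ⟨k, hk⟩ := Module.Baer.of_injective hN I (g.codRestrict N fun x => hgN ⟨x, rfl⟩)
  exact ⟨N.subtype ∘ₗ k, fun x hx => by simp [hk x hx]⟩

end LocallyInjective

section Bass

variable {R : Type u} [Ring R]

theorem exists_forall_support_subset_of_injective_finsupp {ι : Type} {E : Type u} [AddCommGroup E]
    [Module R E] [hE : Module.Injective R (ι →₀ E)] {I : Ideal R} (g : I →ₗ[R] (ι →₀ E)) :
    ∃ S : Finset ι, ∀ x, (g x).support ⊆ S := by
  obtain ⟨k, hk⟩ := Module.Baer.of_injective hE I g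
  refine ⟨(k 1).support, fun x => ?_⟩
  have hgx : g x = (x : R) • k 1 := by rw [← hk x x.2, ← map_smul, smul_eq_mul, mul_one]
  exact hgx ▸ Finsupp.support_smul

theorem exists_linearMap_finsupp_apply_eq_zero_iff (I : ℕ →o Ideal R) :
    ∃ (E : Type u) (_ : AddCommGroup E) (_ : Module R E), Module.Injective R E ∧
      ∃ g : (⨆ n, I n : Ideal R) →ₗ[R] (ℕ →₀ E), ∀ x n, g x n = 0 ↔ (x : R) ∈ I n := by
  obtain ⟨E, _, _, hE, f, hf⟩ := exists_injective_embedding (R := R) (∀ n : ℕ, R ⧸ I n)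
  let φ : R →ₗ[R] (ℕ → E) := LinearMap.pi fun n =>
    f ∘ₗ LinearMap.single R (fun n => R ⧸ I n) n ∘ₗ (I n).mkQ
  have hφ : ∀ x n, φ x n = 0 ↔ x ∈ I n := fun x n => by
    simp [φ, map_eq_zero_iff f hf, Pi.single_eq_zero_iff]
  have hfin : ∀ x ∈ (⨆ n, I n : Ideal R), (Function.support (φ x)).Finite := fun x hx => by
    obtain ⟨n, hn⟩ := (mem_iSup_of_directed _ I.monotone.directed_le).1 hx
    refine (Set.finite_lt_nat n).subset fun m hm => ?_
    by_contra hnm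
    exact hm ((hφ x m).2 (I.monotone (not_lt.1 hnm) hn))
  let g : (⨆ n, I n : Ideal R) →ₗ[R] (ℕ →₀ E) :=
    { toFun := fun x => Finsupp.ofSupportFinite (φ x) (hfin x x.2)
      map_add' := fun x y => Finsupp.ext fun n => congrFun (map_add φ (x : R) y) n
      map_smul' := fun r x => Finsupp.ext fun n => congrFun (map_smul φ r (x : R)) n }
  exact ⟨E, _, _, hE, g, fun x n => hφ x n⟩

theorem isNoetherianRing_of_injective_finsupp
    (h : ∀ (E : Type u) [AddCommGroup E] [Module R E] [Module.Injective R E],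
      Module.Injective R (ℕ →₀ E)) : IsNoetherianRing R := by
  rw [isNoetherianRing_iff, ← monotone_stabilizes_iff_noetherian]
  intro I
  obtain ⟨E, _, _, hE, g, hg⟩ := exists_linearMap_finsupp_apply_eq_zero_iff I
  have := h E
  obtain ⟨S, hS⟩ := exists_forall_support_subset_of_injective_finsupp g
  obtain ⟨n, hn⟩ := Infinite.exists_notMem_finset S
  have hIn : ⨆ m, I m ≤ I n := fun x hx =>
    (hg ⟨x, hx⟩ n).1 (Finsupp.notMem_support_iff.1 fun hmem => hn (hS _ hmem))
  exact ⟨n, fun m hnm => (I.monotone hnm).antisymm ((le_iSup I m).trans hIn)⟩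

end Bass

namespace Categorical

section Ring

variable {R : Type u} [Ring R]

theorem nontrivial {K : ModuleCat.{u} R → Prop} {c : Cardinal.{u}} (h : Categorical R K c)
    (hc : 1 < c) : Nontrivial R := by
  obtain ⟨⟨M, -, rfl⟩, -⟩ := h
  have := one_lt_iff_nontrivial.1 hc
  exact Module.nontrivial R M

theorem nonempty_linearEquiv_prod {Q L : Type u} [AddCommGroup Q] [Module R Q] [AddCommGroup L]
    [Module R L] (h : Categorical R (fun M => LocallyInjective R M) #Q)
    (hQ : LocallyInjective R Q) (hL : LocallyInjective R L) (hinf : ℵ₀ ≤ #Q) (hLQ : #L ≤ #Q) :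
    Nonempty (Q ≃ₗ[R] L × Q) := by
  refine h.2 (.of R Q) (.of R (L × Q)) hQ (hL.prod hQ) rfl ?_
  rw [← mul_def L Q]
  exact mul_eq_right hinf hLQ (mk_ne_zero L)

theorem exists_forall_le_mk_nonempty_linearEquiv_prod
    (h : ∀ᶠ c in atTop, Categorical R (fun M => LocallyInjective R M) c)
    {L : Type u} [AddCommGroup L] [Module R L] (hL : LocallyInjective R L) :
    ∃ c : Cardinal.{u}, ∀ (Q : Type u) [AddCommGroup Q] [Module R Q] [Module.Injective R Q],
      c ≤ #Q → Nonempty (Q ≃ₗ[R] L × Q) := by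
  obtain ⟨c, hc⟩ := eventually_atTop.1 h
  refine ⟨max c (max #L ℵ₀), fun Q _ _ _ hQ => ?_⟩
  obtain ⟨hcQ, hLQ, hinf⟩ : c ≤ #Q ∧ #L ≤ #Q ∧ ℵ₀ ≤ #Q := by simpa using hQ
  exact (hc _ hcQ).nonempty_linearEquiv_prod .of_injective hL hinf hLQ

theorem nontrivial_of_eventually {K : ModuleCat.{u} R → Prop}
    (h : ∀ᶠ c in atTop, Categorical R K c) : Nontrivial R := by
  obtain ⟨c, hc, h1⟩ := (h.and (eventually_gt_atTop 1)).exists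
  exact hc.nontrivial h1

theorem injective_of_eventually
    (h : ∀ᶠ c in atTop, Categorical R (fun M => LocallyInjective R M) c)
    {L : Type u} [AddCommGroup L] [Module R L] (hL : LocallyInjective R L) :
    Module.Injective R L := by
  have := nontrivial_of_eventually h
  obtain ⟨c, hc⟩ := exists_forall_le_mk_nonempty_linearEquiv_prod h hL
  obtain ⟨Q, _, _, _, hcQ⟩ := exists_injective_le_mk R c
  obtain ⟨e⟩ := hc Q hcQ
  exact injective_of_leftInverse (e.symm.toLinearMap ∘ₗ LinearMap.inl R L Q)
    (LinearMap.fst R L Q ∘ₗ e.toLinearMap) fun x => by simp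

theorem isNoetherianRing_of_eventually
    (h : ∀ᶠ c in atTop, Categorical R (fun M => LocallyInjective R M) c) : IsNoetherianRing R :=
  isNoetherianRing_of_injective_finsupp fun _ _ _ _ => injective_of_eventually h .finsupp

end Ring

variable {R : Type u} [CommRing R]

theorem isNilpotent_of_eventually
    (h : ∀ᶠ c in atTop, Categorical R (fun M => LocallyInjective R M) c) {s : R}
    (hs : ¬IsUnit s) : IsNilpotent s := by
  by_contra hnil
  obtain ⟨L, _, _, _, hsL⟩ := exists_injective_not_isSMulRegular hs
  obtain ⟨c, hc⟩ := exists_forall_le_mk_nonempty_linearEquiv_prod h (.of_injective (M := L))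
  obtain ⟨Q, _, _, _, hcQ, hsQ⟩ := exists_injective_le_mk_isSMulRegular hnil c
  obtain ⟨e⟩ := hc Q hcQ
  exact hsL (hsQ.of_injective (e.symm.toLinearMap ∘ₗ LinearMap.inl R L Q)
    (e.symm.injective.comp LinearMap.inl_injective))

theorem isLocalRing_and_isArtinianRing_of_eventually
    (h : ∀ᶠ c in atTop, Categorical R (fun M => LocallyInjective R M) c) :
    IsLocalRing R ∧ IsArtinianRing R := by
  have := nontrivial_of_eventually h
  have := isNoetherianRing_of_eventually h
  have hnil : ∀ s : R, IsNilpotent s ↔ ¬IsUnit s := fun s =>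
    ⟨IsNilpotent.not_isUnit, isNilpotent_of_eventually h⟩
  obtain ⟨hdim, hlocal⟩ := ((Ring.krullDimLE_zero_and_isLocalRing_tfae R).out 2 0).1 hnil
  exact ⟨hlocal, isArtinianRing_iff_krullDimLE_zero.2 hdim⟩

end Categorical

section TorsionBySet

variable {R : Type u} [CommRing R] {M N : Type v} [AddCommGroup M] [Module R M] [AddCommGroup N]
  [Module R N] {I : Ideal R}

theorem smul_mem_torsionBySet_of_mem_mul {J : Ideal R} {a : R} (ha : a ∈ I) {x : M}
    (hx : x ∈ torsionBySet R M ((I * J : Ideal R) : Set R)) :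
    a • x ∈ torsionBySet R M (J : Set R) := by
  rw [mem_torsionBySet_iff] at hx ⊢
  rintro ⟨b, hb⟩
  rw [smul_smul, mul_comm]
  exact hx ⟨a * b, Ideal.mul_mem_mul ha hb⟩

theorem torsionBySet_eq_top_of_eq_bot (hI : I = ⊥) : torsionBySet R M (I : Set R) = ⊤ := by
  subst hI
  simp [Submodule.eq_top_iff']

theorem eq_bot_of_disjoint_torsionBySet (hI : IsNilpotent I) {K : Submodule R M}
    (hK : Disjoint K (torsionBySet R M (I : Set R))) : K = ⊥ := by
  have hpow : ∀ n : ℕ, Disjoint K (torsionBySet R M ((I ^ n : Ideal R) : Set R)) := fun n => by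
    induction n with
    | zero => simp
    | succ n ih =>
      rw [disjoint_def] at hK ih ⊢
      refine fun x hxK hx => hK x hxK ((mem_torsionBySet_iff _ _).2 fun a => ?_)
      exact ih _ (K.smul_mem a hxK) (smul_mem_torsionBySet_of_mem_mul a.2 (pow_succ' I n ▸ hx))
  obtain ⟨n, hn⟩ := hI
  simpa [torsionBySet_eq_top_of_eq_bot hn] using hpow n

theorem nonempty_linearEquiv_of_torsionBySet [Module.Injective R M] [Module.Injective R N]
    (hI : IsNilpotent I)
    (e : torsionBySet R M (I : Set R) ≃ₗ[R] torsionBySet R N (I : Set R)) :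
    Nonempty (M ≃ₗ[R] N) := by
  obtain ⟨f, hf⟩ := Module.Injective.out (torsionBySet R M (I : Set R)).subtype
    (subtype_injective _) ((torsionBySet R N (I : Set R)).subtype ∘ₗ e.toLinearMap)
  have hfker : LinearMap.ker f = ⊥ := by
    refine eq_bot_of_disjoint_torsionBySet hI (disjoint_def.2 fun x hfx hx => ?_)
    have hex : (e ⟨x, hx⟩ : N) = 0 := (hf ⟨x, hx⟩).symm.trans hfx
    simpa using hex
  obtain ⟨p, hp⟩ := Module.Injective.out f (LinearMap.ker_eq_bot.1 hfker) LinearMap.id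
  have hpker : LinearMap.ker p = ⊥ := by
    refine eq_bot_of_disjoint_torsionBySet hI (disjoint_def.2 fun y hpy hy => ?_)
    have hfy : f (e.symm ⟨y, hy⟩) = y := by simpa using hf (e.symm ⟨y, hy⟩)
    have hsymm : p (f (e.symm ⟨y, hy⟩)) = e.symm ⟨y, hy⟩ := hp _
    rw [← hfy, ← hsymm, hfy, LinearMap.mem_ker.1 hpy, map_zero]
  exact ⟨LinearEquiv.ofLinearMap f p
    (LinearMap.ext fun y => LinearMap.ker_eq_bot.1 hpker (by simp [hp]))
    (LinearMap.ext hp)⟩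

end TorsionBySet

section Cardinality

theorem mk_le_mk_mul_mk_ker {R : Type u} {M N : Type v} [Ring R] [AddCommGroup M] [Module R M]
    [AddCommGroup N] [Module R N] (f : M →ₗ[R] N) : #M ≤ #N * #(LinearMap.ker f) := by
  have hM : #M = #(M ⧸ LinearMap.ker f) * #(LinearMap.ker f) :=
    (mk_congr (AddSubgroup.addGroupEquivQuotientProdAddSubgroup
      (s := (LinearMap.ker f).toAddSubgroup))).trans (mul_def _ _).symm
  rw [hM]
  gcongr
  exact mk_le_of_injective (f := (LinearMap.ker f).liftQ f le_rfl)
    (LinearMap.ker_eq_bot.1 (ker_liftQ_eq_bot _ _ _ le_rfl))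

theorem rank_eq_mk_of_lt {R M : Type u} [Ring R] [StrongRankCondition R] [AddCommGroup M]
    [Module R M] [Module.Free R M] (h : max #R ℵ₀ < #M) : Module.rank R M = #M := by
  let b := Module.Free.chooseBasis R M
  have hM : #M = #(Module.Free.ChooseBasisIndex R M →₀ R) := mk_congr b.repr.toEquiv
  have := nontrivial_of_invariantBasisNumber R
  rw [← b.mk_eq_rank'']
  rcases finite_or_infinite (Module.Free.ChooseBasisIndex R M) with _ | _
  · have := Fintype.ofFinite (Module.Free.ChooseBasisIndex R M)
    rw [mk_finsupp_of_fintype] at hM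
    exact absurd (hM.le.trans power_nat_le_max) h.not_ge
  · rw [mk_finsupp_of_infinite] at hM
    rcases max_eq_iff.1 hM.symm with ⟨hι, -⟩ | ⟨hR, -⟩
    · exact hι
    · exact absurd hR ((le_max_left _ _).trans_lt h).ne

variable {R M : Type u} [CommRing R] [AddCommGroup M] [Module R M] {I : Ideal R}

theorem mk_torsionBySet_mul_le {J : Ideal R} {s : Finset R} (hs : span R (s : Set R) = I) :
    #(torsionBySet R M ((I * J : Ideal R) : Set R)) ≤
      #(torsionBySet R M (J : Set R)) ^ #s * #(torsionBySet R M (I : Set R)) := by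
  have hsI : ∀ a ∈ s, a ∈ I := fun a ha => hs ▸ subset_span ha
  let φ : torsionBySet R M ((I * J : Ideal R) : Set R) →ₗ[R]
      (s → torsionBySet R M (J : Set R)) := LinearMap.pi fun a =>
    (LinearMap.lsmul R M a).restrict fun _ => smul_mem_torsionBySet_of_mem_mul (hsI a a.2)
  have hker : ∀ x : LinearMap.ker φ, (x : M) ∈ torsionBySet R M (I : Set R) := fun x => by
    have hsT : torsionBySet R M (s : Set R) = torsionBySet R M (I : Set R) :=
      hs ▸ torsionBySet_eq_torsionBySet_span (s : Set R)
    rw [← hsT, mem_torsionBySet_iff]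
    exact fun a => congrArg Subtype.val (congrFun x.2 a)
  refine (mk_le_mk_mul_mk_ker φ).trans (mul_le_mul' (power_def _ _).ge ?_)
  exact mk_le_of_injective (f := fun x => (⟨_, hker x⟩ : torsionBySet R M (I : Set R)))
    fun x y hxy => Subtype.ext (Subtype.ext (Subtype.mk.inj hxy))

theorem mk_torsionBySet_pow_le (hI : I.FG) (n : ℕ) :
    #(torsionBySet R M ((I ^ n : Ideal R) : Set R)) ≤ max #(torsionBySet R M (I : Set R)) ℵ₀ := by
  obtain ⟨s, hs⟩ := hI
  induction n with
  | zero => simp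
  | succ n ih =>
    set c := max #(torsionBySet R M (I : Set R)) ℵ₀
    have hc : ℵ₀ ≤ c := le_max_right _ _
    calc #(torsionBySet R M ((I ^ (n + 1) : Ideal R) : Set R))
      _ ≤ #(torsionBySet R M ((I ^ n : Ideal R) : Set R)) ^ #s * #(torsionBySet R M (I : Set R)) :=
        pow_succ' I n ▸ mk_torsionBySet_mul_le hs
      _ ≤ c ^ #s * c := mul_le_mul' (power_le_power_right ih) (le_max_left _ _)
      _ ≤ c * c := by
        gcongr
        exact (congrArg (c ^ ·) mk_coe_finset).trans_le (power_nat_le hc)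
      _ = c := mul_eq_self hc

theorem mk_torsionBySet_eq_mk (hfg : I.FG) (hnil : IsNilpotent I) (hM : ℵ₀ < #M) :
    #(torsionBySet R M (I : Set R)) = #M := by
  obtain ⟨n, hn⟩ := hnil
  have hle : #M ≤ max #(torsionBySet R M (I : Set R)) ℵ₀ := by
    have h := mk_torsionBySet_pow_le (M := M) hfg n
    rwa [torsionBySet_eq_top_of_eq_bot hn, mk_congr topEquiv.toEquiv] at h
  exact (mk_subtype_le _).antisymm ((le_max_iff.1 hle).resolve_right hM.not_ge)

end Cardinality

section MaximalNilpotent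

variable {R : Type u} [CommRing R] {m : Ideal R} [m.IsMaximal]

theorem rank_torsionBySet_eq_mk {M : Type u} [AddCommGroup M] [Module R M] (hfg : m.FG)
    (hnil : IsNilpotent m) (hM : max #R ℵ₀ < #M) :
    Module.rank (R ⧸ m) (torsionBySet R M (m : Set R)) = #M := by
  let _ := Ideal.Quotient.field m
  have hT : #(torsionBySet R M (m : Set R)) = #M :=
    mk_torsionBySet_eq_mk hfg hnil ((le_max_right _ _).trans_lt hM)
  have hRm : #(R ⧸ m) ≤ #R := mk_quotient_le
  rw [← hT] at hM
  exact (rank_eq_mk_of_lt ((max_le_max_right _ hRm).trans_lt hM)).trans hT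

theorem nonempty_linearEquiv_of_injective_of_mk_eq {M N : Type u} [AddCommGroup M] [Module R M]
    [AddCommGroup N] [Module R N] [Module.Injective R M] [Module.Injective R N] (hfg : m.FG)
    (hnil : IsNilpotent m) (hM : max #R ℵ₀ < #M) (hMN : #M = #N) : Nonempty (M ≃ₗ[R] N) := by
  let _ := Ideal.Quotient.field m
  have hrank : Module.rank (R ⧸ m) (torsionBySet R M (m : Set R)) =
      Module.rank (R ⧸ m) (torsionBySet R N (m : Set R)) := by
    rw [rank_torsionBySet_eq_mk hfg hnil hM, rank_torsionBySet_eq_mk hfg hnil (hMN ▸ hM), hMN]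
  obtain ⟨e⟩ := nonempty_linearEquiv_of_rank_eq hrank
  exact nonempty_linearEquiv_of_torsionBySet hnil (e.restrictScalars R)

end MaximalNilpotent

section Existence

variable {R : Type u} [CommRing R] {J : Type v} [AddCommGroup J] [Module R J]

/-- The restriction of endomorphisms of `J` to the submodule of elements killed by `s`, which every
endomorphism preserves. Idempotents of `End R J` are obtained by lifting along it. -/
def endTorsionBySet (s : Set R) (J : Type v) [AddCommGroup J] [Module R J] :
    Module.End R J →+* Module.End R (torsionBySet R J s) where
  toFun φ := φ.restrict fun x hx => (mem_torsionBySet_iff _ _).2 fun a => by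
    rw [← map_smul, (mem_torsionBySet_iff _ _).1 hx a, map_zero]
  map_one' := rfl
  map_mul' _ _ := rfl
  map_zero' := rfl
  map_add' _ _ := rfl

theorem endTorsionBySet_surjective [Module.Injective R J] (s : Set R) :
    Function.Surjective (endTorsionBySet s J) := fun φ => by
  obtain ⟨ψ, hψ⟩ := Module.Injective.out (torsionBySet R J s).subtype (subtype_injective _)
    ((torsionBySet R J s).subtype ∘ₗ φ)
  exact ⟨ψ, LinearMap.ext fun x => Subtype.ext (hψ x)⟩

theorem isNilpotent_of_mem_ker_endTorsionBySet {I : Ideal R} (hI : IsNilpotent I)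
    {φ : Module.End R J} (hφ : φ ∈ RingHom.ker (endTorsionBySet (I : Set R) J)) :
    IsNilpotent φ := by
  have hφ0 : ∀ x ∈ torsionBySet R J (I : Set R), φ x = 0 := fun x hx =>
    congrArg Subtype.val (LinearMap.congr_fun hφ ⟨x, hx⟩)
  have hpow : ∀ n : ℕ, ∀ x ∈ torsionBySet R J ((I ^ n : Ideal R) : Set R), (φ ^ n) x = 0 := by
    intro n
    induction n with
    | zero => simp
    | succ n ih =>
      intro x hx
      rw [pow_succ, Module.End.mul_apply]
      refine ih _ ((mem_torsionBySet_iff _ _).2 fun a => ?_)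
      rw [← map_smul]
      exact hφ0 _ (smul_mem_torsionBySet_of_mem_mul a.2 (pow_succ I n ▸ hx))
  obtain ⟨n, hn⟩ := hI
  have htop := torsionBySet_eq_top_of_eq_bot (M := J) hn
  exact ⟨n, LinearMap.ext fun x => hpow n x (htop ▸ mem_top)⟩

theorem isSemisimpleModule_torsionBySet (m : Ideal R) [m.IsMaximal] :
    IsSemisimpleModule R (torsionBySet R J (m : Set R)) := by
  let _ := Ideal.Quotient.field m
  rw [← (torsionBySet_isTorsionBySet (M := J) (m : Set R)).isSemisimpleModule_iff]
  infer_instance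

theorem exists_injective_inf_torsionBySet_eq [Module.Injective R J] {m : Ideal R} [m.IsMaximal]
    (hm : IsNilpotent m) {V : Submodule R J} (hV : V ≤ torsionBySet R J (m : Set R)) :
    ∃ H : Submodule R J, Module.Injective R H ∧ H ⊓ torsionBySet R J (m : Set R) = V := by
  have := isSemisimpleModule_torsionBySet (J := J) m
  obtain ⟨W, hW⟩ := exists_isCompl (V.submoduleOf (torsionBySet R J (m : Set R)))
  obtain ⟨e, he, hep⟩ := exists_isIdempotentElem_eq_of_ker_isNilpotent
    (endTorsionBySet (m : Set R) J) (fun _ => isNilpotent_of_mem_ker_endTorsionBySet hm)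
    (projection _ W hW) (endTorsionBySet_surjective _ _) (isIdempotentElem_projection hW)
  have hrange : ∀ x, x ∈ LinearMap.range e ↔ e x = x := fun x =>
    LinearMap.IsIdempotentElem.mem_range_iff he
  refine ⟨LinearMap.range e, injective_of_leftInverse (LinearMap.range e).subtype
    e.rangeRestrict fun x => Subtype.ext ((hrange x).1 x.2), ?_⟩
  have heV : ∀ x ∈ torsionBySet R J (m : Set R), e x = x ↔ x ∈ V := fun x hx => by
    have := projection_eq_self_iff hW ⟨x, hx⟩
    rwa [← hep, Subtype.ext_iff] at this
  ext x
  rw [mem_inf, hrange]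
  exact ⟨fun h => (heV x h.2).1 h.1, fun h => ⟨(heV x (hV h)).2 h, hV h⟩⟩

theorem map_subtype_torsionBySet (H : Submodule R J) (s : Set R) :
    (torsionBySet R H s).map H.subtype = H ⊓ torsionBySet R J s := by
  ext x
  simp [mem_torsionBySet_iff, and_comm]

theorem exists_injective_mk_eq {m : Ideal R} [m.IsMaximal] (hfg : m.FG) (hnil : IsNilpotent m)
    {c : Cardinal.{u}} (hc : max #R ℵ₀ < c) :
    ∃ (H : Type u) (_ : AddCommGroup H) (_ : Module R H), Module.Injective R H ∧ #H = c := by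
  have hℵ₀c : ℵ₀ < c := (le_max_right _ _).trans_lt hc
  have : Infinite c.out := infinite_iff.2 (hℵ₀c.le.trans_eq (mk_out c).symm)
  obtain ⟨J, _, _, _, f, hf⟩ := exists_injective_embedding (R := R) (c.out →₀ R ⧸ m)
  have hfc : #(LinearMap.range f) = c := by
    rw [← mk_congr (LinearEquiv.ofInjective f hf).toEquiv, mk_finsupp_of_infinite, mk_out]
    exact max_eq_left (mk_quotient_le.trans ((le_max_left _ _).trans hc.le))
  have hfT : LinearMap.range f ≤ torsionBySet R J (m : Set R) := by
    rintro _ ⟨x, rfl⟩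
    refine (mem_torsionBySet_iff _ _).2 fun a => ?_
    have hax : (a : R) • x = 0 := Finsupp.ext fun i => by
      rw [Finsupp.smul_apply, Algebra.smul_def, Ideal.Quotient.algebraMap_eq,
        Ideal.Quotient.eq_zero_iff_mem.2 a.2, zero_mul, Finsupp.zero_apply]
    rw [← map_smul, hax, map_zero]
  obtain ⟨H, hH, hHf⟩ := exists_injective_inf_torsionBySet_eq hnil hfT
  refine ⟨H, _, _, hH, ?_⟩
  have hcH : ℵ₀ < #H := hℵ₀c.trans_le (hfc ▸ mk_le_mk_of_subset (hHf ▸ inf_le_left))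
  rw [← mk_torsionBySet_eq_mk hfg hnil hcH, ← hfc, ← hHf, ← map_subtype_torsionBySet]
  exact mk_congr (equivMapOfInjective _ H.injective_subtype _).toEquiv

end Existence

theorem categorical_locallyInjective_of_lt {R : Type u} [CommRing R] [IsLocalRing R]
    [IsArtinianRing R] {c : Cardinal.{u}} (hc : max #R ℵ₀ < c) :
    Categorical R (fun M => LocallyInjective R M) c := by
  have hfg : (IsLocalRing.maximalIdeal R).FG := IsNoetherian.noetherian _
  have hnil := (isArtinianRing_iff_isNilpotent_maximalIdeal R).1 inferInstance
  obtain ⟨H, _, _, _, hH⟩ := exists_injective_mk_eq hfg hnil hc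
  refine ⟨⟨.of R H, .of_injective, hH⟩, fun M N hM hN hMc hNc => ?_⟩
  have := hM.injective
  have := hN.injective
  exact nonempty_linearEquiv_of_injective_of_mk_eq hfg hnil (hMc ▸ hc) (hMc.trans hNc.symm)

theorem stmt8_general (R : Type u) [CommRing R] :
    [∀ᶠ c : Cardinal.{u} in atTop, Categorical R (fun M => LocallyInjective R M) c,
      ∀ c : Cardinal.{u}, #R + ℵ₀ < c → Categorical R (fun M => LocallyInjective R M) c,
      IsLocalRing R ∧ IsArtinianRing R].TFAE := by
  tfae_have 1 → 3 := Categorical.isLocalRing_and_isArtinianRing_of_eventually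
  tfae_have 3 → 2 := fun ⟨_, _⟩ c hc =>
    categorical_locallyInjective_of_lt (hc.trans_eq' (add_eq_max' le_rfl))
  tfae_have 2 → 1 := fun h => (eventually_gt_atTop _).mono h
  tfae_finish

theorem stmt8 (R : Type u) [CommRing R] :
    (∀ c : Cardinal.{u}, #R + ℵ₀ < c →
      Categorical R (fun M => LocallyInjective R (M : Type u)) c) ↔
    (IsLocalRing R ∧ IsArtinianRing R) :=
  (stmt8_general R).out 1 2
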